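/- Let 𝒜 be an alphabet with 1 ∈ 𝒜 and δ = δ_𝒜 > 1/2, A = max 𝒜, and let ε₀ ∈ (0, 1/2500). Then there exists N₀ (depending on 𝒜 and ε₀) such that for every integer N ≥ N₀ there is a finite set Ω ⊆ Γ_𝒜 with: (i) every γ ∈ Ω satisfies N/(70A²) ≤ ‖γ‖ ≤ 1.01·N; (ii) N^{2δ−ε₀} ≤ #Ω ≤ 9·N^{2δ}. -/

import Mathlib

open Real Filter

noncomputable section

/-- The continuant `⟨d₁,…,d_k⟩`, with `⟨⟩ = 1`, satisfying
`⟨d₁,…,d_k⟩ = d₁·⟨d₂,…,d_k⟩ + ⟨d₃,…,d_k⟩`. -/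
def cont : List ℕ → ℕ
  | [] => 1
  | [d] => d
  | d :: e :: l => d * cont (e :: l) + cont l

/-- The value of the finite continued fraction `[d₁,…,d_k] = ⟨d₂,…,d_k⟩ / ⟨d₁,…,d_k⟩`. -/
def cfVal (l : List ℕ) : ℝ := (cont l.tail : ℝ) / (cont l : ℝ)

/-- The set `E_𝒜` of values of infinite continued fractions `[0; d₁, d₂, …]`
with all partial quotients in `𝒜`. -/
def cfSet (A : Finset ℕ) : Set ℝ :=
  {x | ∃ d : ℕ → ℕ, (∀ i, d i ∈ A) ∧
    Tendsto (fun k => cfVal ((List.range k).map d)) atTop (nhds x)}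

/-- `δ_𝒜`, the Hausdorff dimension of `E_𝒜` (as a real number). -/
def hdim (A : Finset ℕ) : ℝ := (dimH (cfSet A)).toReal

/-- The generator `(0 1; 1 d)` of the semigroup `Γ_𝒜`. -/
def gen (d : ℕ) : Matrix (Fin 2) (Fin 2) ℤ := !![0, 1; 1, (d : ℤ)]

/-- The norm `‖γ‖`: the maximum of the absolute values of the entries. -/
def mnorm (γ : Matrix (Fin 2) (Fin 2) ℤ) : ℤ :=
  max (max |γ 0 0| |γ 0 1|) (max |γ 1 0| |γ 1 1|)

/-- The semigroup `Γ_𝒜` generated by the matrices `(0 1; 1 a)`, `a ∈ 𝒜`. -/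
def Gamma (A : Finset ℕ) : Set (Matrix (Fin 2) (Fin 2) ℤ) :=
  {γ | ∃ l : List ℕ, l ≠ [] ∧ (∀ d ∈ l, d ∈ A) ∧ γ = (l.map gen).prod}

abbrev PP (l : List ℕ) : Matrix (Fin 2) (Fin 2) ℤ := (l.map gen).prod

lemma PP_cons (x : ℕ) (l : List ℕ) : PP (x :: l) = gen x * PP l := by simp [PP]

lemma PP_append (l m : List ℕ) : PP (l ++ m) = PP l * PP m := by simp [PP]

lemma gen_mul (x : ℕ) (M : Matrix (Fin 2) (Fin 2) ℤ) :
    (gen x * M) 0 0 = M 1 0 ∧ (gen x * M) 0 1 = M 1 1 ∧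
    (gen x * M) 1 0 = M 0 0 + x * M 1 0 ∧ (gen x * M) 1 1 = M 0 1 + x * M 1 1 := by
  simp [gen, Matrix.mul_apply, Fin.sum_univ_two]

lemma mul_gen (x : ℕ) (M : Matrix (Fin 2) (Fin 2) ℤ) :
    (M * gen x) 1 0 = M 1 1 ∧ (M * gen x) 1 1 = M 1 0 + x * M 1 1 := by
  simp [gen, Matrix.mul_apply, Fin.sum_univ_two, mul_comm]

lemma PP_cont (l : List ℕ) : PP l 1 1 = cont l ∧
    PP l 0 1 = if l = [] then 0 else (cont l.tail : ℤ) := by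
  induction l with
  | nil => simp [PP, cont]
  | cons x l ih =>
    obtain ⟨h1, h2⟩ := ih
    obtain ⟨-, g2, -, g4⟩ := gen_mul x (PP l)
    rw [PP_cons, g2, g4, h1, h2]
    refine ⟨?_, by simp⟩
    cases l with
    | nil => simp [cont]
    | cons e l => simp [cont]; ring

lemma PP_inv (l : List ℕ) (hl : ∀ d ∈ l, 0 < d) :
    0 ≤ PP l 0 0 ∧ 0 ≤ PP l 0 1 ∧ 0 ≤ PP l 1 0 ∧ 1 ≤ PP l 1 1 ∧
    PP l 1 0 ≤ PP l 1 1 ∧ PP l 0 1 ≤ PP l 1 1 ∧ PP l 0 0 ≤ PP l 1 1 ∧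
    PP l 0 0 + PP l 1 0 ≤ PP l 0 1 + PP l 1 1 := by
  induction l with
  | nil => simp [PP]
  | cons x l ih =>
    obtain ⟨a1, a2, a3, a4, a5, a6, a7, a8⟩ := ih (fun d hd => hl d (by simp [hd]))
    obtain ⟨g1, g2, g3, g4⟩ := gen_mul x (PP l)
    have hx : (1 : ℤ) ≤ x := by exact_mod_cast hl x (by simp)
    rw [PP_cons, g1, g2, g3, g4]
    refine ⟨?_, ?_, ?_, ?_, ?_, ?_, ?_, ?_⟩ <;> nlinarith

lemma PP_det (l : List ℕ) : |PP l 0 0 * PP l 1 1 - PP l 0 1 * PP l 1 0| = 1 := by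
  induction l with
  | nil => simp [PP]
  | cons x l ih =>
    obtain ⟨g1, g2, g3, g4⟩ := gen_mul x (PP l)
    rw [PP_cons, g1, g2, g3, g4, ← ih, ← abs_neg]
    congr 1
    ring

lemma PP_mnorm (l : List ℕ) (hl : ∀ d ∈ l, 0 < d) : mnorm (PP l) = PP l 1 1 := by
  obtain ⟨a1, a2, a3, a4, a5, a6, a7, a8⟩ := PP_inv l hl
  unfold mnorm
  rw [abs_of_nonneg a1, abs_of_nonneg a2, abs_of_nonneg a3, abs_of_nonneg (by omega)]
  omega

lemma cfVal_PP (l : List ℕ) (hne : l ≠ []) :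
    cfVal l = (PP l 0 1 : ℝ) / (PP l 1 1 : ℝ) := by
  obtain ⟨h1, h2⟩ := PP_cont l
  rw [h1, h2, if_neg hne, cfVal]
  simp

lemma cfVal_close (l m : List ℕ) (hne : l ≠ []) (hl : ∀ d ∈ l, 0 < d) (hm : ∀ d ∈ m, 0 < d) :
    |cfVal (l ++ m) - cfVal l| ≤ 1 / (PP l 1 1 : ℝ) ^ 2 := by
  rw [cfVal_PP l hne, cfVal_PP (l ++ m) (by simp [hne]), PP_append]
  obtain ⟨a1, a2, a3, a4, a5, a6, a7, a8⟩ := PP_inv l hl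
  obtain ⟨b1, b2, b3, b4, b5, b6, b7, b8⟩ := PP_inv m hm
  have hd := PP_det l
  have e1 : (PP l * PP m) 0 1 = PP l 0 0 * PP m 0 1 + PP l 0 1 * PP m 1 1 := by
    simp only [Matrix.mul_apply, Fin.sum_univ_two]
  have e2 : (PP l * PP m) 1 1 = PP l 1 0 * PP m 0 1 + PP l 1 1 * PP m 1 1 := by
    simp only [Matrix.mul_apply, Fin.sum_univ_two]
  rw [e1, e2]
  generalize PP l 0 0 = a at *
  generalize PP l 0 1 = b at *
  generalize PP l 1 0 = c at *
  generalize PP l 1 1 = d at *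
  generalize PP m 0 1 = u at *
  generalize PP m 1 1 = v at *
  push_cast
  have hd' : |(a : ℝ) * d - b * c| = 1 := by exact_mod_cast hd
  have a2 : (0:ℝ) ≤ b := by exact_mod_cast a2
  have a3 : (0:ℝ) ≤ c := by exact_mod_cast a3
  have a4 : (1:ℝ) ≤ d := by exact_mod_cast a4
  have b2 : (0:ℝ) ≤ u := by exact_mod_cast b2
  have b4 : (1:ℝ) ≤ v := by exact_mod_cast b4
  have b6 : (u:ℝ) ≤ v := by exact_mod_cast b6
  have hcu : (0:ℝ) ≤ c * u := by positivity
  have hdv : (0:ℝ) < d * v := by positivity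
  have hq : (0:ℝ) < c * u + d * v := by positivity
  have hd0 : (0:ℝ) < d := by linarith
  have key : ((a:ℝ) * u + b * v) / (c * u + d * v) - b / d
      = (a * d - b * c) * (u / ((c * u + d * v) * d)) := by
    field_simp
    ring
  rw [key, abs_mul, hd', one_mul, abs_of_nonneg (by positivity),
    div_le_div_iff₀ (by positivity) (by positivity)]
  nlinarith [mul_le_mul_of_nonneg_left b6 (by positivity : (0:ℝ) ≤ d ^ 2), mul_nonneg hcu hd0.le]

lemma range_succ_PP (d : ℕ → ℕ) (k : ℕ) :
    PP ((List.range (k+1)).map d) = PP ((List.range k).map d) * gen (d k) := by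
  rw [List.range_succ, List.map_append, PP_append]
  simp [PP]

lemma q_ge (d : ℕ → ℕ) (hd : ∀ i, 0 < d i) (k : ℕ) :
    (k : ℤ) ≤ PP ((List.range k).map d) 1 1 := by
  have pos : ∀ k, ∀ e ∈ (List.range k).map d, 0 < e := by
    intro k e he
    obtain ⟨i, -, rfl⟩ := List.mem_map.1 he
    exact hd i
  match k with
  | 0 => simp [PP]
  | 1 => simpa using (PP_inv _ (pos 1)).2.2.2.1
  | k+2 =>
    have ih := q_ge d hd (k+1)
    have h0 := (PP_inv _ (pos k)).2.2.2.1
    have h3 : (1:ℤ) ≤ d (k+1) := by exact_mod_cast hd (k+1)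
    rw [range_succ_PP d (k+1), (mul_gen _ _).2]
    have : PP ((List.range (k+1)).map d) 1 0 = PP ((List.range k).map d) 1 1 := by
      rw [range_succ_PP, (mul_gen _ _).1]
    rw [this]
    push_cast at *
    nlinarith

/-- covering -/
lemma cover (A : Finset ℕ) (hpos : ∀ a ∈ A, 0 < a)
    (Amax : ℕ) (hub : ∀ a ∈ A, a ≤ Amax) (N : ℕ) (hN : Amax ≤ N) (x : ℝ) (hx : x ∈ cfSet A) :
    ∃ γ ∈ Gamma A, (N : ℤ) ≤ (Amax + 1) * mnorm γ ∧ mnorm γ ≤ N ∧ mnorm γ = γ 1 1 ∧ 1 ≤ γ 1 1 ∧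
      |x - (γ 0 1 : ℝ) / (γ 1 1 : ℝ)| ≤ 1 / (γ 1 1 : ℝ) ^ 2 := by
  classical
  obtain ⟨d, hd, hlim⟩ := hx
  have hd0 : ∀ i, 0 < d i := fun i => hpos _ (hd i)
  have pos : ∀ k, ∀ e ∈ (List.range k).map d, 0 < e := by
    intro k e he
    obtain ⟨i, -, rfl⟩ := List.mem_map.1 he
    exact hd0 i
  have hex : ∃ k, (N : ℤ) < PP ((List.range k).map d) 1 1 :=
    ⟨N + 1, by have := q_ge d hd0 (N+1); push_cast at this; omega⟩
  obtain ⟨k, hk⟩ : ∃ k, k = Nat.find hex := ⟨_, rfl⟩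
  have hspec := Nat.find_spec hex
  have hmin := fun m => @Nat.find_min _ _ hex m
  rw [← hk] at hspec hmin
  have hA1 : 1 ≤ Amax := (hd0 0).trans_le (hub _ (hd 0))
  match k with
  | 0 => simp [PP] at hspec; omega
  | 1 =>
    exfalso
    have := hub _ (hd 0)
    have e : PP ((List.range 1).map d) 1 1 = d 0 := by simp [PP, gen]
    rw [e] at hspec
    omega
  | j+2 =>
    have hj := not_lt.1 (hmin (j+1) (by omega))
    have hinv := PP_inv _ (pos (j+1))
    have hne : (List.range (j+1)).map d ≠ [] := by simp
    refine ⟨PP ((List.range (j+1)).map d), ⟨_, hne, ?_, rfl⟩, ?_⟩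
    · intro e he
      obtain ⟨i, -, rfl⟩ := List.mem_map.1 he
      exact hd i
    rw [PP_mnorm _ (pos _)]
    refine ⟨?_, hj, rfl, hinv.2.2.2.1, ?_⟩
    · rw [range_succ_PP, (mul_gen _ _).2] at hspec
      have : (d (j+1) : ℤ) ≤ Amax := by exact_mod_cast hub _ (hd _)
      nlinarith [hinv.2.2.2.1, hinv.2.2.2.2.1]
    · rw [← cfVal_PP _ hne]
      have ht := (hlim.sub_const (cfVal ((List.range (j+1)).map d))).abs
      refine le_of_tendsto ht ?_
      filter_upwards [eventually_ge_atTop (j+1)] with m hm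
      obtain ⟨t, rfl⟩ := Nat.exists_eq_add_of_le hm
      have : (List.range (j+1+t)).map d
          = (List.range (j+1)).map d ++ (List.range t).map (fun i => d (j+1+i)) := by
        rw [List.range_add, List.map_append, List.map_map]
        rfl
      rw [this]
      apply cfVal_close _ _ hne (pos _)
      intro e he
      obtain ⟨i, -, rfl⟩ := List.mem_map.1 he
      exact hd0 _

def W (A : Finset ℕ) (Amax N : ℕ) : Set (Matrix (Fin 2) (Fin 2) ℤ) :=
  {γ | γ ∈ Gamma A ∧ (N : ℤ) ≤ (Amax + 1) * mnorm γ ∧ mnorm γ ≤ N}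

lemma W_finite (A : Finset ℕ) (Amax N : ℕ) : (W A Amax N).Finite := by
  have : (Set.pi Set.univ (fun _ : Fin 2 => Set.pi Set.univ
      (fun _ : Fin 2 => Set.Icc (-(N:ℤ)) N))).Finite :=
    Set.Finite.pi' (fun _ => Set.Finite.pi' (fun _ => Set.finite_Icc _ _)) |>.subset (by
      intro f hf i j
      exact hf i trivial j trivial)
  refine this.subset ?_
  rintro γ ⟨-, -, h⟩ i - j -
  unfold mnorm at h
  simp only [max_le_iff, abs_le] at h
  fin_cases i <;> fin_cases j <;> simp <;> omega

open MeasureTheory ENNReal in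
lemma dim_bound (A : Finset ℕ) (hpos : ∀ a ∈ A, 0 < a)
    (Amax : ℕ) (hub : ∀ a ∈ A, a ≤ Amax) (s : ℝ) (hs : 0 ≤ s)
    (u : ℕ → ℕ) (hu : Tendsto u atTop atTop)
    (hc : ∀ n, ((W_finite A Amax (u n)).toFinset.card : ℝ) ≤ (u n : ℝ) ^ (2 * s)) :
    dimH (cfSet A) ≤ ENNReal.ofReal s := by
  set K : ℝ := 2 * (Amax + 1) ^ 2 with hK
  have hK0 : 0 < K := by positivity
  let t : ∀ n : ℕ, (W_finite A Amax (u n)).toFinset → Set ℝ := fun n γ =>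
    Set.Icc ((γ.1 0 1 : ℝ) / (γ.1 1 1 : ℝ) - (K / 2) / (u n : ℝ) ^ 2)
      ((γ.1 0 1 : ℝ) / (γ.1 1 1 : ℝ) + (K / 2) / (u n : ℝ) ^ 2)
  have hdiam : ∀ n γ, Metric.ediam (t n γ) = ENNReal.ofReal (K / (u n : ℝ) ^ 2) := by
    intro n γ
    simp only [t]
    rw [Real.ediam_Icc]
    congr 1
    ring
  have hr : Tendsto (fun n => ENNReal.ofReal (K / (u n : ℝ) ^ 2)) atTop (nhds 0) := by
    rw [← ENNReal.ofReal_zero]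
    apply ENNReal.tendsto_ofReal
    apply Tendsto.div_atTop tendsto_const_nhds
    exact (tendsto_pow_atTop (by norm_num)).comp (tendsto_natCast_atTop_atTop.comp hu)
  have hmain := Measure.hausdorffMeasure_le_liminf_sum s (cfSet A) _ hr t
    (Eventually.of_forall fun n γ => (hdiam n γ).le) (by
      filter_upwards [hu.eventually_ge_atTop Amax, hu.eventually_ge_atTop 1] with n hn hn1
      intro x hx
      obtain ⟨γ, h1, h2, h3, h4, h5, h6⟩ := cover A hpos Amax hub (u n) hn x hx
      refine Set.mem_iUnion.2 ⟨⟨γ, (W_finite A Amax (u n)).mem_toFinset.2 ⟨h1, h2, h3⟩⟩, ?_⟩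
      rw [h4] at h2
      have h2' : (u n : ℝ) ≤ (Amax + 1) * (γ 1 1 : ℝ) := by exact_mod_cast h2
      have h5' : (1 : ℝ) ≤ (γ 1 1 : ℝ) := by exact_mod_cast h5
      have hn1' : (1 : ℝ) ≤ u n := by exact_mod_cast hn1
      have : 1 / (γ 1 1 : ℝ) ^ 2 ≤ (K / 2) / (u n : ℝ) ^ 2 := by
        rw [div_le_div_iff₀ (by positivity) (by positivity), hK]
        calc 1 * (u n : ℝ) ^ 2 ≤ ((Amax + 1) * (γ 1 1 : ℝ)) ^ 2 := by
              rw [one_mul]; gcongr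
          _ = _ := by ring
      have h7 := abs_le.1 (h6.trans this)
      simp only [t, Set.mem_Icc]
      constructor <;> linarith [h7.1, h7.2])
  have hle : μH[s] (cfSet A) ≤ ENNReal.ofReal (K ^ s) := by
    refine hmain.trans ?_
    calc _ ≤ liminf (fun _ : ℕ => ENNReal.ofReal (K ^ s)) atTop := by
          refine liminf_le_liminf ?_ (by isBoundedDefault) (by isBoundedDefault)
          filter_upwards [hu.eventually_ge_atTop 1] with n hn
          have hn1 : (0 : ℝ) < u n := by exact_mod_cast hn
          simp only [hdiam]
          rw [Finset.sum_const, ENNReal.ofReal_rpow_of_nonneg (by positivity) hs, nsmul_eq_mul,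
            ← ENNReal.ofReal_natCast, ← ENNReal.ofReal_mul (by positivity)]
          apply ENNReal.ofReal_le_ofReal
          have hcn := hc n
          rw [Finset.card_univ, Fintype.card_coe]
          calc _ ≤ (u n : ℝ) ^ (2 * s) * (K / (u n : ℝ) ^ 2) ^ s := by gcongr
            _ = K ^ s := by
              rw [Real.div_rpow hK0.le (by positivity), ← Real.rpow_natCast, ← Real.rpow_mul hn1.le]
              push_cast
              field_simp
      _ = _ := liminf_const _
  have := dimH_le_of_hausdorffMeasure_ne_top (s := cfSet A) (d := ⟨s, hs⟩)
    (ne_top_of_le_ne_top ENNReal.ofReal_ne_top hle)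
  rwa [ENNReal.ofReal, Real.toNNReal_of_nonneg hs]

theorem ensemble_exists
    (A : Finset ℕ) (hpos : ∀ a ∈ A, 0 < a) (hcard : 2 ≤ A.card) (h1 : 1 ∈ A)
    (Amax : ℕ) (hmem : Amax ∈ A) (hub : ∀ a ∈ A, a ≤ Amax)
    (hδ : 1/2 < hdim A)
    (ε₀ : ℝ) (hε : 0 < ε₀) (hε' : ε₀ < 1/2500) :
    ∃ N₀ : ℕ, ∀ N : ℕ, N₀ ≤ N →
      ∃ Ω : Finset (Matrix (Fin 2) (Fin 2) ℤ),
        (↑Ω : Set (Matrix (Fin 2) (Fin 2) ℤ)) ⊆ Gamma A ∧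
        (∀ γ ∈ Ω, (N : ℝ) / (70 * (Amax : ℝ)^2) ≤ (mnorm γ : ℝ) ∧
          (mnorm γ : ℝ) ≤ 1.01 * N) ∧
        (N : ℝ) ^ (2 * hdim A - ε₀) ≤ (Ω.card : ℝ) ∧
        (Ω.card : ℝ) ≤ 9 * (N : ℝ) ^ (2 * hdim A) := by
  by_contra hcon
  push Not at hcon
  have hA0 : 0 < Amax := hpos _ hmem
  have hA1 : (1 : ℝ) ≤ Amax := by exact_mod_cast hA0
  choose u hu1 hu2 using fun n : ℕ => hcon (n + 1)
  have hu : Tendsto u atTop atTop :=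
    tendsto_atTop_mono (fun n => (Nat.le_succ n).trans (hu1 n)) tendsto_id
  have hs : 0 ≤ hdim A - ε₀ / 2 := by linarith
  have hb := dim_bound A hpos Amax hub (hdim A - ε₀ / 2) hs u hu (by
    intro n
    by_contra hlt
    rw [not_le] at hlt
    have e : 2 * (hdim A - ε₀ / 2) = 2 * hdim A - ε₀ := by ring
    rw [e] at hlt
    have hn1 : (1 : ℝ) ≤ u n := by exact_mod_cast (Nat.le_add_left 1 n).trans (hu1 n)
    obtain ⟨Ω, hΩ, hcardΩ⟩ := Finset.exists_subset_card_eq (Nat.ceil_le.2 hlt.le)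
    have hW : ∀ γ ∈ Ω, γ ∈ W A Amax (u n) := fun γ hγ =>
      (W_finite A Amax (u n)).mem_toFinset.1 (hΩ hγ)
    have hbad := hu2 n Ω (fun γ hγ => (hW γ hγ).1) (by
      intro γ hγ
      obtain ⟨-, h2, h3⟩ := hW γ hγ
      have h2' : (u n : ℝ) ≤ (Amax + 1) * (mnorm γ : ℝ) := by exact_mod_cast h2
      have h3' : (mnorm γ : ℝ) ≤ u n := by exact_mod_cast h3
      have h0 : (0 : ℝ) ≤ mnorm γ := by
        have : (0 : ℤ) ≤ mnorm γ := (abs_nonneg _).trans ((le_max_left _ _).trans (le_max_left _ _))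
        exact_mod_cast this
      refine ⟨?_, by linarith⟩
      rw [div_le_iff₀ (by positivity)]
      have : (Amax : ℝ) + 1 ≤ 70 * (Amax : ℝ) ^ 2 := by nlinarith
      nlinarith) (by rw [hcardΩ]; exact Nat.le_ceil _)
    rw [hcardΩ] at hbad
    have h4 := Nat.ceil_lt_add_one (by positivity : (0:ℝ) ≤ (u n : ℝ) ^ (2 * hdim A - ε₀))
    have h5 : (u n : ℝ) ^ (2 * hdim A - ε₀) ≤ (u n : ℝ) ^ (2 * hdim A) :=
      Real.rpow_le_rpow_of_exponent_le hn1 (by linarith)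
    have h6 : (1 : ℝ) ≤ (u n : ℝ) ^ (2 * hdim A) := Real.one_le_rpow hn1 (by linarith)
    linarith)
  have := ENNReal.toReal_mono ENNReal.ofReal_ne_top hb
  rw [ENNReal.toReal_ofReal hs] at this
  change hdim A ≤ _ at this
  linarith

end
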